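/- Let M ≥ 1 and T ≥ 1 be integers and let the initial ages h_{1,1} ≥ h_{1,2} ≥ … ≥ h_{1,M} be weakly decreasing positive integers. Let h^G denote the ages under the round-robin schedule and h^s the ages under an arbitrary schedule s satisfying |s_k| ≤ T for every k, both started from the same initial ages. Then for every frame k ≥ 1, Σ_{i=1}^M h^G_{k,i} ≤ Σ_{i=1}^M h^s_{k,i}; consequently, for every horizon K ≥ 1, Σ_{k=1}^K Σ_{i=1}^M h^G_{k,i} ≤ Σ_{k=1}^K Σ_{i=1}^M h^s_{k,i}. That is, in a symmetric network with error-free channels the Greedy (round-robin) policy attains the minimum sum Age of Information among all schedules. -/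

import Mathlib

/-- The age process: `ageP h1 s k i` is the age of client `i` at frame `k` (frames
are 1-indexed; `ageP h1 s 1 = h1`).  The ages evolve by `h_{k+1,i} = 1` if `i ∈ s k`
and `h_{k+1,i} = h_{k,i} + 1` otherwise. -/
def ageP (h1 : ℕ → ℕ) (s : ℕ → Finset ℕ) : ℕ → ℕ → ℕ
  | 0, i => h1 i
  | 1, i => h1 i
  | (k+2), i => if i ∈ s (k+1) then 1 else ageP h1 s (k+1) i + 1

/-- `rrClient M n = (n mod M) + 1`, the client served in the `n`-th round-robin slot. -/
def rrClient (M n : ℕ) : ℕ := n % M + 1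

/-- The round-robin schedule: in frame `k ≥ 1` the `L = min M T` distinct clients
`σ((k-1)L), …, σ(kL - 1)` are served. -/
def rrSched (M T : ℕ) (k : ℕ) : Finset ℕ :=
  (Finset.range (min M T)).image (fun j => rrClient M ((k - 1) * min M T + j))

theorem rr_surj (M c i : ℕ) (h1 : 1 ≤ i) (h2 : i ≤ M) : ∃ p < M, rrClient M (c + p) = i := by
  have hr : c % M < M := Nat.mod_lt _ (by omega)
  unfold rrClient
  by_cases h : c % M ≤ i - 1
  · refine ⟨i - 1 - c % M, by omega, ?_⟩
    rw [← Nat.mod_add_mod, show c % M + (i - 1 - c % M) = i - 1 by omega,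
      Nat.mod_eq_of_lt (by omega)]
    omega
  · refine ⟨i - 1 + M - c % M, by omega, ?_⟩
    rw [← Nat.mod_add_mod, show c % M + (i - 1 + M - c % M) = i - 1 + M by omega,
      Nat.add_mod_right, Nat.mod_eq_of_lt (by omega)]
    omega

theorem rr_inj (M c p q : ℕ) (hp : p < M) (hq : q < M)
    (h : rrClient M (c + p) = rrClient M (c + q)) : p = q := by
  unfold rrClient at h
  have h' : c + p ≡ c + q [MOD M] := by
    unfold Nat.ModEq; omega
  have := Nat.ModEq.add_left_cancel' c h'
  exact Nat.ModEq.eq_of_lt_of_lt this hp hq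

theorem rr_mem (M T n p : ℕ) (hp : p < M) :
    rrClient M (n * min M T + p) ∈ rrSched M T (n + 1) ↔ p < min M T := by
  unfold rrSched
  simp only [Finset.mem_image, Finset.mem_range, Nat.add_sub_cancel]
  constructor
  · rintro ⟨j, hj, h⟩
    have := rr_inj M _ j p (lt_of_lt_of_le hj (min_le_left _ _)) hp h
    omega
  · intro h
    exact ⟨p, h, rfl⟩

theorem rr_card (M T n : ℕ) : (rrSched M T (n + 1)).card = min M T := by
  unfold rrSched
  rw [Finset.card_image_of_injOn, Finset.card_range]
  intro a ha b hb h
  simp only [Finset.coe_range, Set.mem_Iio] at ha hb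
  exact rr_inj M _ a b (lt_of_lt_of_le ha (min_le_left _ _))
    (lt_of_lt_of_le hb (min_le_left _ _)) h

theorem rr_sub (M T k : ℕ) (hM : 1 ≤ M) : rrSched M T k ⊆ Finset.Icc 1 M := by
  intro i hi
  unfold rrSched rrClient at hi
  simp only [Finset.mem_image] at hi
  obtain ⟨j, _, rfl⟩ := hi
  have := Nat.mod_lt ((k - 1) * min M T + j) (show 0 < M by omega)
  simp only [Finset.mem_Icc]
  omega

theorem age_pos (M : ℕ) (h1 : ℕ → ℕ) (hpos : ∀ i ∈ Finset.Icc 1 M, 1 ≤ h1 i)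
    (s : ℕ → Finset ℕ) (n : ℕ) : ∀ i ∈ Finset.Icc 1 M, 1 ≤ ageP h1 s (n + 1) i := by
  intro i hi
  cases n with
  | zero => exact hpos i hi
  | succ n => rw [ageP]; split_ifs <;> omega

theorem rr_sorted (M T : ℕ) (hM : 1 ≤ M)
    (h1 : ℕ → ℕ) (hpos : ∀ i ∈ Finset.Icc 1 M, 1 ≤ h1 i)
    (hdec : ∀ i j : ℕ, 1 ≤ i → i ≤ j → j ≤ M → h1 j ≤ h1 i) (n : ℕ) :
    ∀ p q, p ≤ q → q < M →
      ageP h1 (rrSched M T) (n + 1) (rrClient M (n * min M T + q)) ≤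
      ageP h1 (rrSched M T) (n + 1) (rrClient M (n * min M T + p)) := by
  induction n with
  | zero =>
    intro p q hpq hq
    simp only [ageP, rrClient, Nat.zero_mul, Nat.zero_add]
    rw [Nat.mod_eq_of_lt hq, Nat.mod_eq_of_lt (by omega)]
    exact hdec _ _ (by omega) (by omega) (by omega)
  | succ n ih =>
    intro p q hpq hq
    have e : ∀ x, (n + 1) * min M T + x = n * min M T + (min M T + x) := by intro x; ring
    have hL : min M T ≤ M := min_le_left _ _
    rw [e, e]
    by_cases h : min M T + q < M
    · rw [ageP, ageP, if_neg (fun c => by rw [rr_mem M T n _ h] at c; omega),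
        if_neg (fun c => by rw [rr_mem M T n _ (by omega)] at c; omega)]
      have := ih (min M T + p) (min M T + q) (by omega) h
      omega
    · have hx : rrClient M (n * min M T + (min M T + q)) =
          rrClient M (n * min M T + (min M T + q - M)) := by
        unfold rrClient
        rw [show n * min M T + (min M T + q) = n * min M T + (min M T + q - M) + M by omega,
          Nat.add_mod_right]
      rw [hx, ageP, if_pos ((rr_mem M T n _ (by omega)).2 (by omega))]
      apply age_pos M h1 hpos _ (n + 1)
      unfold rrClient
      have := Nat.mod_lt (n * min M T + (min M T + p)) (show 0 < M by omega)
      simp only [Finset.mem_Icc]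
      omega

/-- Number of clients of age more than `a`. -/
def cnt (M : ℕ) (f : ℕ → ℕ) (a : ℕ) : ℕ := ((Finset.Icc 1 M).filter (fun i => a < f i)).card

theorem cnt_le (M : ℕ) (f : ℕ → ℕ) (a : ℕ) : cnt M f a ≤ M := by
  unfold cnt
  calc _ ≤ (Finset.Icc 1 M).card := Finset.card_filter_le _ _
    _ = M := by simp

theorem cnt_zero (M : ℕ) (f : ℕ → ℕ) (h : ∀ i ∈ Finset.Icc 1 M, 1 ≤ f i) : cnt M f 0 = M := by
  unfold cnt
  rw [Finset.filter_true_of_mem (p := fun i => 0 < f i) (fun i hi => h i hi)]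
  simp

theorem cnt_succ (M : ℕ) (h1 : ℕ → ℕ) (s : ℕ → Finset ℕ) (n a : ℕ) :
    cnt M (ageP h1 s (n + 2)) (a + 1) =
    (((Finset.Icc 1 M).filter (fun i => a < ageP h1 s (n + 1) i)) \ s (n + 1)).card := by
  unfold cnt
  congr 1
  ext i
  rw [Finset.mem_filter, Finset.mem_sdiff, Finset.mem_filter, ageP]
  split_ifs with h <;> simp [h]

theorem sum_cnt (M : ℕ) (f : ℕ → ℕ) (B : ℕ) (hB : ∀ i ∈ Finset.Icc 1 M, f i ≤ B) :
    ∑ i ∈ Finset.Icc 1 M, f i = ∑ a ∈ Finset.range B, cnt M f a := by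
  simp only [cnt, Finset.card_filter]
  rw [Finset.sum_comm]
  refine Finset.sum_congr rfl fun i hi => ?_
  rw [← Finset.card_filter]
  have : (Finset.range B).filter (fun a => a < f i) = Finset.range (f i) := by
    ext a
    have := hB i hi
    simp only [Finset.mem_filter, Finset.mem_range]
    omega
  rw [this, Finset.card_range]

theorem cnt_main (M T : ℕ) (hM : 1 ≤ M)
    (h1 : ℕ → ℕ) (hpos : ∀ i ∈ Finset.Icc 1 M, 1 ≤ h1 i)
    (hdec : ∀ i j : ℕ, 1 ≤ i → i ≤ j → j ≤ M → h1 j ≤ h1 i)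
    (s : ℕ → Finset ℕ) (hcard : ∀ k, (s k).card ≤ T) (n : ℕ) :
    ∀ a, cnt M (ageP h1 (rrSched M T) (n + 1)) a ≤ cnt M (ageP h1 s (n + 1)) a := by
  induction n with
  | zero => intro a; exact le_of_eq rfl
  | succ n ih =>
    intro a
    cases a with
    | zero =>
      rw [cnt_zero M _ (age_pos M h1 hpos _ (n + 1)), cnt_zero M _ (age_pos M h1 hpos _ (n + 1))]
    | succ a =>
      have hs : cnt M (ageP h1 s (n + 1)) a - T ≤ cnt M (ageP h1 s (n + 2)) (a + 1) := by
        rw [cnt_succ]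
        have := Finset.le_card_sdiff (s (n + 1))
          ((Finset.Icc 1 M).filter (fun i => a < ageP h1 s (n + 1) i))
        have := hcard (n + 1)
        unfold cnt
        omega
      have hg : cnt M (ageP h1 (rrSched M T) (n + 2)) (a + 1) ≤
          cnt M (ageP h1 (rrSched M T) (n + 1)) a - min M T := by
        rw [cnt_succ]
        rcases Finset.eq_empty_or_nonempty (((Finset.Icc 1 M).filter
          (fun i => a < ageP h1 (rrSched M T) (n + 1) i)) \ rrSched M T (n + 1)) with h | ⟨j, hj⟩
        · rw [h]; simp
        · rw [Finset.card_sdiff_of_subset, rr_card]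
          · rfl
          · intro i hi
            have hi' := rr_sub M T (n + 1) hM hi
            simp only [Finset.mem_filter, Finset.mem_sdiff, Finset.mem_Icc] at hj hi' ⊢
            obtain ⟨⟨hj1, hj2⟩, hj3⟩ := hj
            refine ⟨hi', lt_of_lt_of_le hj2 ?_⟩
            obtain ⟨p, hp, rfl⟩ := rr_surj M (n * min M T) i hi'.1 hi'.2
            obtain ⟨q, hq, rfl⟩ := rr_surj M (n * min M T) j hj1.1 hj1.2
            rw [rr_mem M T n _ hp] at hi
            rw [rr_mem M T n _ hq] at hj3
            exact rr_sorted M T hM h1 hpos hdec n p q (by omega) hq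
      have := ih a
      have := cnt_le M (ageP h1 (rrSched M T) (n + 1)) a
      show cnt M (ageP h1 (rrSched M T) (n + 2)) (a + 1) ≤ cnt M (ageP h1 s (n + 2)) (a + 1)
      omega

/-- Optimality of Greedy (round-robin) for error-free channels: starting from weakly
decreasing positive initial ages, the round-robin schedule attains, in every frame
`k ≥ 1`, a sum of ages no larger than that of any feasible schedule (at most `T`
deliveries per frame); consequently its cumulative sum AoI over any horizon `K` is
minimal. -/
theorem stmt2 (M T : ℕ) (hM : 1 ≤ M) (hT : 1 ≤ T)
    (h1 : ℕ → ℕ) (hpos : ∀ i ∈ Finset.Icc 1 M, 1 ≤ h1 i)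
    (hdec : ∀ i j : ℕ, 1 ≤ i → i ≤ j → j ≤ M → h1 j ≤ h1 i)
    (s : ℕ → Finset ℕ) (hs : ∀ k, s k ⊆ Finset.Icc 1 M)
    (hcard : ∀ k, (s k).card ≤ T) :
    (∀ k : ℕ, 1 ≤ k →
      ∑ i ∈ Finset.Icc 1 M, ageP h1 (rrSched M T) k i
        ≤ ∑ i ∈ Finset.Icc 1 M, ageP h1 s k i) ∧
    (∀ K : ℕ, 1 ≤ K →
      ∑ k ∈ Finset.Icc 1 K, ∑ i ∈ Finset.Icc 1 M, ageP h1 (rrSched M T) k i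
        ≤ ∑ k ∈ Finset.Icc 1 K, ∑ i ∈ Finset.Icc 1 M, ageP h1 s k i) := by
  have key : ∀ k : ℕ, 1 ≤ k →
      ∑ i ∈ Finset.Icc 1 M, ageP h1 (rrSched M T) k i
        ≤ ∑ i ∈ Finset.Icc 1 M, ageP h1 s k i := by
    intro k hk
    obtain ⟨n, rfl⟩ : ∃ n, k = n + 1 := ⟨k - 1, by omega⟩
    have hb : ∀ f : ℕ → ℕ, ∀ i ∈ Finset.Icc 1 M, f i ≤ ∑ i ∈ Finset.Icc 1 M, f i :=
      fun f i hi => Finset.single_le_sum (fun _ _ => Nat.zero_le _) hi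
    set B := (∑ i ∈ Finset.Icc 1 M, ageP h1 (rrSched M T) (n + 1) i)
      + ∑ i ∈ Finset.Icc 1 M, ageP h1 s (n + 1) i with hB
    rw [sum_cnt M (ageP h1 (rrSched M T) (n + 1)) B
        (fun i hi => (hb _ i hi).trans (Nat.le_add_right _ _)),
      sum_cnt M (ageP h1 s (n + 1)) B (fun i hi => (hb _ i hi).trans (Nat.le_add_left _ _))]
    exact Finset.sum_le_sum fun a _ => cnt_main M T hM h1 hpos hdec s hcard n a
  exact ⟨key, fun K _ => Finset.sum_le_sum fun k hk => key k (Finset.mem_Icc.mp hk).1⟩
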